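/- Fix α > 0 and δ ∈ (0,1). Suppose assumptions (A1), (A4), (A5), (A6) hold, and that the output (v̂, ŵ) of Inexact-PRO-RL satisfies the optimization-error conditions L̂_α(v̂,ŵ) − min_{v∈V} L̂_α(v,ŵ) ≤ ε_{o,v} and max_{w∈W} min_{v∈V} L̂_α(v,w) − min_{v∈V} L̂_α(v,ŵ) ≤ ε_{o,w}. Then with probability at least 1−δ over the datasets, J(π*_α) − J(π̂) ≤ (1/(1−γ))·E_{s∼d*_α}[‖π*_α(·|s) − π̂(·|s)‖₁] ≤ (2/(1−γ))·‖ŵ − w*_α‖_{2,d^D} ≤ (4/(1−γ))·√(ε_stat/(α·M_f)) + (2/(1−γ))·√(2(ε_opt + ε_{α,app})/(α·M_f)), where ε_opt = ε_{o,v} + ε_{o,w} and ε_{α,app} = (B_{w,α}+1)·ε_{α,r,v} + (B_{e,α} + α·B_{f',α})·ε_{α,r,w}. -/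

import Mathlib

open MeasureTheory
open scoped BigOperators ENNReal

namespace ProRL

/-- The discrete measure on a type induced by a real-valued weight function. -/
noncomputable def discMeasure {X : Type*} [MeasurableSpace X] (p : X → ℝ) : Measure X :=
  Measure.sum fun x => ENNReal.ofReal (p x) • Measure.dirac x

variable {S A : Type*} [Fintype S] [Fintype A]

/-- The `t`-step state-action distribution of policy `π` started from `μ0`. -/
noncomputable def saDist (P : S → A → S → ℝ) (μ0 : S → ℝ) (π : S → A → ℝ) :
    ℕ → S → A → ℝ
  | 0 => fun s a => μ0 s * π s a
  | t + 1 => fun s a =>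
      (∑ s' : S, ∑ a' : A, saDist P μ0 π t s' a' * P s' a' s) * π s a

/-- The discounted state-action occupancy `d^π(s,a)`. -/
noncomputable def occ (P : S → A → S → ℝ) (μ0 : S → ℝ) (γ : ℝ) (π : S → A → ℝ)
    (s : S) (a : A) : ℝ :=
  (1 - γ) * ∑' t : ℕ, γ ^ t * saDist P μ0 π t s a

/-- The (normalized) expected discounted return `J(π) = E_{d^π}[r]`. -/
noncomputable def Jret (P : S → A → S → ℝ) (r : S → A → ℝ) (μ0 : S → ℝ) (γ : ℝ)
    (π : S → A → ℝ) : ℝ :=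
  ∑ s : S, ∑ a : A, occ P μ0 γ π s a * r s a

/-- `π` is a (stationary, stochastic) policy. -/
def IsPolicy (π : S → A → ℝ) : Prop :=
  (∀ s a, 0 ≤ π s a) ∧ ∀ s, ∑ a : A, π s a = 1

/-- The Bellman residual `e_v(s,a) = r(s,a) + γ ∑_{s'} P(s'|s,a) v(s') − v(s)`. -/
noncomputable def eV (P : S → A → S → ℝ) (r : S → A → ℝ) (γ : ℝ) (v : S → ℝ)
    (s : S) (a : A) : ℝ :=
  r s a + γ * ∑ s' : S, P s a s' * v s' - v s

/-- The population Lagrangian `L_α(v,w)`. -/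
noncomputable def Lag (P : S → A → S → ℝ) (r : S → A → ℝ) (μ0 : S → ℝ) (γ : ℝ)
    (dD : S → A → ℝ) (f : ℝ → ℝ) (α : ℝ) (v : S → ℝ) (w : S → A → ℝ) : ℝ :=
  (1 - γ) * ∑ s : S, μ0 s * v s
    - α * ∑ s : S, ∑ a : A, dD s a * f (w s a)
    + ∑ s : S, ∑ a : A, dD s a * (w s a * eV P r γ v s a)

/-- The empirical Lagrangian `L̂_α(v,w)` built from the transition dataset `D`
(`D i = ((sᵢ,aᵢ), s'ᵢ)`, with `rᵢ = r sᵢ aᵢ`) and initial-state dataset `D0`. -/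
noncomputable def empLag (r : S → A → ℝ) (γ : ℝ) (f : ℝ → ℝ) (α : ℝ) {n n0 : ℕ}
    (D : Fin n → (S × A) × S) (D0 : Fin n0 → S) (v : S → ℝ) (w : S → A → ℝ) : ℝ :=
  (1 - γ) * ((n0 : ℝ)⁻¹ * ∑ j : Fin n0, v (D0 j))
    - α * ((n : ℝ)⁻¹ * ∑ i : Fin n, f (w (D i).1.1 (D i).1.2))
    + (n : ℝ)⁻¹ * ∑ i : Fin n,
        w (D i).1.1 (D i).1.2 *
          (r (D i).1.1 (D i).1.2 + γ * v (D i).2 - v (D i).1.1)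

/-- Per-state normalization of a state-action weight into a policy
(uniform where the state marginal is not positive). -/
noncomputable def normPolicy (d : S → A → ℝ) (s : S) (a : A) : ℝ :=
  if 0 < ∑ a' : A, d s a' then d s a / ∑ a' : A, d s a'
  else (Fintype.card A : ℝ)⁻¹

/-- Policy extraction from a density ratio `w` and a behavior policy `piD`
(uniform where the normalizer vanishes). -/
noncomputable def extractPolicy (piD w : S → A → ℝ) (s : S) (a : A) : ℝ :=
  if 0 < ∑ a' : A, w s a' * piD s a' then
    w s a * piD s a / ∑ a' : A, w s a' * piD s a'
  else (Fintype.card A : ℝ)⁻¹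

/-- Behavior policy `π_D(a|s)` obtained from the data distribution `d^D`. -/
noncomputable def behPolicy (dD : S → A → ℝ) : S → A → ℝ := normPolicy dD

/-- The state-action measure `d(s,a) = w(s,a)·d^D(s,a)`. -/
noncomputable def dstar (dD w : S → A → ℝ) : S → A → ℝ := fun s a => w s a * dD s a

/-- The weighted `L²(d^D)` norm of a state-action function. -/
noncomputable def l2nrm (dD g : S → A → ℝ) : ℝ :=
  Real.sqrt (∑ s : S, ∑ a : A, dD s a * g s a ^ 2)

/-- `‖π(·|s) − π'(·|s)‖₁`. -/
noncomputable def l1Pol (π π' : S → A → ℝ) (s : S) : ℝ := ∑ a : A, |π s a - π' s a|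

/-- `E_{s ∼ d}[‖π(·|s) − π'(·|s)‖₁]` where `d` is a state-action distribution. -/
noncomputable def expL1 (d π π' : S → A → ℝ) : ℝ :=
  ∑ s : S, (∑ a : A, d s a) * l1Pol π π' s

/-- The statistical error term `ε_stat`. -/
noncomputable def epsStat (γ α Bv Bf Bw Be δ : ℝ) (nV nW n n0 : ℕ) : ℝ :=
  (1 - γ) * Bv * Real.sqrt (2 * Real.log (4 * (nV : ℝ) / δ) / (n0 : ℝ))
    + (α * Bf + Bw * Be) *
        Real.sqrt (2 * Real.log (4 * ((nV : ℝ) * (nW : ℝ)) / δ) / (n : ℝ))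

/-- The Bellman flow equations for a state-action measure `d`. -/
def BellmanFlow (P : S → A → S → ℝ) (μ0 : S → ℝ) (γ : ℝ) (d : S → A → ℝ) : Prop :=
  ∀ s : S, ∑ a : A, d s a
    = (1 - γ) * μ0 s + γ * ∑ s' : S, ∑ a' : A, P s' a' s * d s' a'

/-- `(v,w)` is a saddle point of `max_{w ≥ 0} min_v L_α(v,w)`. -/
def IsSaddle (P : S → A → S → ℝ) (r : S → A → ℝ) (μ0 : S → ℝ) (γ : ℝ)
    (dD : S → A → ℝ) (f : ℝ → ℝ) (α : ℝ) (v : S → ℝ) (w : S → A → ℝ) : Prop :=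
  (∀ s a, 0 ≤ w s a) ∧
  (∀ v' : S → ℝ, Lag P r μ0 γ dD f α v w ≤ Lag P r μ0 γ dD f α v' w) ∧
  (∀ w' : S → A → ℝ, (∀ s a, 0 ≤ w' s a) →
    Lag P r μ0 γ dD f α v w' ≤ Lag P r μ0 γ dD f α v w)

/-- `(v,w)` is a saddle point of `max_{0 ≤ w ≤ Bw} min_v L_α(v,w)` (constrained LP). -/
def IsSaddleB (P : S → A → S → ℝ) (r : S → A → ℝ) (μ0 : S → ℝ) (γ : ℝ)
    (dD : S → A → ℝ) (f : ℝ → ℝ) (α Bw : ℝ) (v : S → ℝ) (w : S → A → ℝ) : Prop :=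
  (∀ s a, 0 ≤ w s a ∧ w s a ≤ Bw) ∧
  (∀ v' : S → ℝ, Lag P r μ0 γ dD f α v w ≤ Lag P r μ0 γ dD f α v' w) ∧
  (∀ w' : S → A → ℝ, (∀ s a, 0 ≤ w' s a ∧ w' s a ≤ Bw) →
    Lag P r μ0 γ dD f α v w' ≤ Lag P r μ0 γ dD f α v w)

/-- `(vhat, what)` is an exact max-min point of the empirical Lagrangian over `V × W`:
`vhat ∈ argmin_{v ∈ V} L̂(v, what)` and `what ∈ argmax_{w ∈ W} min_{v ∈ V} L̂(v, w)`. -/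
def IsProRLOutput (r : S → A → ℝ) (γ : ℝ) (f : ℝ → ℝ) (α : ℝ)
    (V : Finset (S → ℝ)) (W : Finset (S → A → ℝ)) {n n0 : ℕ}
    (D : Fin n → (S × A) × S) (D0 : Fin n0 → S)
    (vhat : S → ℝ) (what : S → A → ℝ) : Prop :=
  vhat ∈ V ∧ what ∈ W ∧
  (∀ v ∈ V, empLag r γ f α D D0 vhat what ≤ empLag r γ f α D D0 v what) ∧
  ∀ w ∈ W, ∀ vw ∈ V,
    (∀ v ∈ V, empLag r γ f α D D0 vw w ≤ empLag r γ f α D D0 v w) →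
      empLag r γ f α D D0 vw w ≤ empLag r γ f α D D0 vhat what

/-- Weight of a transition tuple `((s,a),s')` under `(s,a) ∼ d^D`, `s' ∼ P(·|s,a)`. -/
noncomputable def tupleWeight (P : S → A → S → ℝ) (dD : S → A → ℝ)
    (x : (S × A) × S) : ℝ :=
  dD x.1.1 x.1.2 * P x.1.1 x.1.2 x.2

/-- The joint law of the transition dataset `D` (i.i.d. from `d^D ⊗ P`) and the
initial-state dataset `D0` (i.i.d. from `μ0`). -/
noncomputable def dataMeasure [MeasurableSpace S] [MeasurableSpace A]
    (P : S → A → S → ℝ) (dD : S → A → ℝ) (μ0 : S → ℝ) (n n0 : ℕ) :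
    Measure ((Fin n → (S × A) × S) × (Fin n0 → S)) :=
  (Measure.pi fun _ : Fin n => discMeasure (tupleWeight P dD)).prod
    (Measure.pi fun _ : Fin n0 => discMeasure μ0)

/-- The joint law of datasets `D1`, `D2` (both i.i.d. from `d^D ⊗ P`) and `D0`
(i.i.d. from `μ0`), used by PRO-RL-BC. -/
noncomputable def dataMeasure3 [MeasurableSpace S] [MeasurableSpace A]
    (P : S → A → S → ℝ) (dD : S → A → ℝ) (μ0 : S → ℝ) (n1 n2 n0 : ℕ) :
    Measure ((Fin n1 → (S × A) × S) × (Fin n2 → (S × A) × S) × (Fin n0 → S)) :=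
  (Measure.pi fun _ : Fin n1 => discMeasure (tupleWeight P dD)).prod
    ((Measure.pi fun _ : Fin n2 => discMeasure (tupleWeight P dD)).prod
      (Measure.pi fun _ : Fin n0 => discMeasure μ0))

/-- `v` is the optimal value function: it satisfies the Bellman optimality equation. -/
def IsOptValue [Nonempty A] (P : S → A → S → ℝ) (r : S → A → ℝ) (γ : ℝ)
    (v : S → ℝ) : Prop :=
  ∀ s : S, v s = Finset.univ.sup' Finset.univ_nonempty
    (fun a : A => r s a + γ * ∑ s' : S, P s a s' * v s')

/-- Basic assumptions on the MDP, the regularizer-free data, and the data distribution. -/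
structure MDPAssumptions (P : S → A → S → ℝ) (r : S → A → ℝ) (μ0 : S → ℝ) (γ : ℝ)
    (dD : S → A → ℝ) : Prop where
  P_nonneg : ∀ s a s', 0 ≤ P s a s'
  P_sum : ∀ s a, ∑ s' : S, P s a s' = 1
  r_nonneg : ∀ s a, 0 ≤ r s a
  r_le_one : ∀ s a, r s a ≤ 1
  γ_nonneg : 0 ≤ γ
  γ_lt_one : γ < 1
  μ0_pos : ∀ s, 0 < μ0 s
  μ0_sum : ∑ s : S, μ0 s = 1
  dD_nonneg : ∀ s a, 0 ≤ dD s a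
  dD_sum : ∑ s : S, ∑ a : A, dD s a = 1

/-- Regularity of the regularizer `f`: continuously differentiable with derivative `f'`,
`M_f`-strongly convex, and with `|f'| ≤ Bf'`, `|f| ≤ Bf` on `[0, Bw]`. -/
structure RegAssumptions (f f' : ℝ → ℝ) (Mf Bw Bf' Bf : ℝ) : Prop where
  deriv : ∀ x, HasDerivAt f (f' x) x
  strong : StrongConvexOn Set.univ Mf f
  Mf_pos : 0 < Mf
  f'_bdd : ∀ x, 0 ≤ x → x ≤ Bw → |f' x| ≤ Bf'
  f_bdd : ∀ x, 0 ≤ x → x ≤ Bw → |f x| ≤ Bf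

/-- `w` is an optimal density ratio of the unregularized LP (the set `W*₀`). -/
def OptRatio (P : S → A → S → ℝ) (r : S → A → ℝ) (μ0 : S → ℝ) (γ : ℝ)
    (dD : S → A → ℝ) (w : S → A → ℝ) : Prop :=
  (∀ s a, 0 ≤ w s a) ∧ BellmanFlow P μ0 γ (dstar dD w) ∧
  ∀ w' : S → A → ℝ, (∀ s a, 0 ≤ w' s a) → BellmanFlow P μ0 γ (dstar dD w') →
    ∑ s : S, ∑ a : A, dstar dD w' s a * r s a
      ≤ ∑ s : S, ∑ a : A, dstar dD w s a * r s a

/-!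
Optimality of `v*` at the saddle point says that `d* = w*·d^D` satisfies the Bellman flow equations.
If `d` and `d'` satisfy them with conditional policies `π` and `π'`, the equations give
`‖d − d'‖₁ ≤ E_d‖π − π'‖₁ + γ‖d − d'‖₁`. With `π = π'` this makes `d*` the occupancy of `π*`, and
otherwise it bounds the difference of returns. Conversely `E_{d*}‖π* − π̂‖₁ ≤ 2‖ŵ·d^D − d*‖₁`,
even though `ŵ·d^D` need not satisfy any flow equation.

Strong convexity of `f` makes `L_α(v*, ·)` fall off quadratically from its maximum `w*`, so it is
enough to bound `L_α(v*, w*) − L_α(v*, ŵ)`. Hoeffding's inequality and a union bound compare the two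
Lagrangians uniformly on `V × W`, and `L_α(·, w*)` is constant by the flow equations, so `v*` can be
traded for whichever element of `V` minimizes the empirical Lagrangian.
-/

section Concentration

open ProbabilityTheory

variable {X : Type*} [MeasurableSpace X] {μ : Measure X} [IsProbabilityMeasure μ]

theorem hasSubgaussianMGF_eval_sub_integral {g : X → ℝ} (hgm : AEMeasurable g μ) {c : ℝ}
    (hg : ∀ x, |g x| ≤ c) {n : ℕ} (i : Fin n) :
    HasSubgaussianMGF (fun D : Fin n → X => g (D i) - μ[g]) (‖c‖₊ ^ 2)
      (Measure.pi fun _ => μ) := by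
  have heval := measurePreserving_eval (fun _ : Fin n => μ) i
  refine HasSubgaussianMGF.of_map (Y := Function.eval i) (X := fun x => g x - μ[g])
    heval.measurable.aemeasurable ?_
  have hrange : ‖c - -c‖₊ / 2 = ‖c‖₊ := by
    rw [sub_neg_eq_add, ← two_mul, nnnorm_mul, Real.nnnorm_two, mul_div_cancel_left₀ _ two_ne_zero]
  rw [heval.map_eq, ← hrange]
  exact hasSubgaussianMGF_of_mem_Icc hgm (.of_forall fun x => abs_le.1 (hg x))

theorem measureReal_pi_lt_mean_sub_integral_le {g : X → ℝ} (hgm : AEMeasurable g μ) {c : ℝ}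
    (hg : ∀ x, |g x| ≤ c) {n : ℕ} (hn : 0 < n) {l : ℝ} (hl : 0 ≤ l) :
    (Measure.pi fun _ : Fin n => μ).real
      {D | c * √(2 * l / n) < (n : ℝ)⁻¹ * ∑ i, g (D i) - μ[g]} ≤ Real.exp (-l) := by
  have hn' : (0 : ℝ) < n := by exact_mod_cast hn
  obtain ⟨x₀⟩ := nonempty_of_isProbabilityMeasure μ
  rcases ((abs_nonneg _).trans (hg x₀)).eq_or_lt with rfl | hc
  · have hg0 : g = 0 := funext fun x => abs_nonpos_iff.1 (hg x)
    simp [hg0, Real.exp_nonneg]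
  have hindep : iIndepFun (fun (i : Fin n) (D : Fin n → X) => g (D i) - μ[g])
      (Measure.pi fun _ => μ) :=
    iIndepFun_pi (X := fun _ x => g x - μ[g]) fun _ => hgm.sub_const _
  have hdev : 0 ≤ n * (c * √(2 * l / n)) := by positivity
  have hexp : -(n * (c * √(2 * l / n))) ^ 2 / (2 * ∑ _i : Fin n, ‖c‖₊ ^ 2 : NNReal) = -l := by
    push_cast
    rw [mul_pow, mul_pow, Real.sq_sqrt (by positivity), Real.norm_of_nonneg hc.le]
    simp only [Finset.sum_const, Finset.card_univ, Fintype.card_fin, nsmul_eq_mul]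
    field_simp
  have hoeffding := HasSubgaussianMGF.measure_sum_ge_le_of_iIndepFun hindep
    (s := Finset.univ) (fun i _ => hasSubgaussianMGF_eval_sub_integral hgm hg i) hdev
  push_cast at hexp hoeffding
  rw [hexp] at hoeffding
  refine (measureReal_mono (fun D hD => ?_) (measure_ne_top _ _)).trans hoeffding
  simp only [Set.mem_ofPred_eq, Finset.sum_sub_distrib, Finset.sum_const, Finset.card_univ,
    Fintype.card_fin, nsmul_eq_mul] at hD ⊢
  have := mul_le_mul_of_nonneg_left hD.le hn'.le
  rwa [mul_sub, mul_inv_cancel_left₀ hn'.ne'] at this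

theorem measureReal_pi_lt_abs_mean_sub_integral_le {g : X → ℝ} (hgm : AEMeasurable g μ) {c : ℝ}
    (hg : ∀ x, |g x| ≤ c) {n : ℕ} (hn : 0 < n) {l : ℝ} (hl : 0 ≤ l) :
    (Measure.pi fun _ : Fin n => μ).real
      {D | c * √(2 * l / n) < |(n : ℝ)⁻¹ * ∑ i, g (D i) - μ[g]|} ≤ 2 * Real.exp (-l) := by
  have hupper := measureReal_pi_lt_mean_sub_integral_le hgm hg hn hl
  have hlower := measureReal_pi_lt_mean_sub_integral_le hgm.neg (c := c) (by simpa using hg) hn hl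
  rw [two_mul (Real.exp (-l))]
  refine (measureReal_mono (fun D hD => ?_) (measure_ne_top _ _)).trans
    ((measureReal_union_le _ _).trans (add_le_add hupper hlower))
  rcases lt_abs.1 (Set.mem_ofPred.1 hD) with h | h
  · exact Or.inl h
  · refine Or.inr ?_
    simp only [Set.mem_ofPred_eq, Pi.neg_apply, Finset.sum_neg_distrib, integral_neg]
    linarith

theorem le_measureReal_pi_forall_abs_mean_sub_integral_le {ι : Type*} {T : Finset ι}
    (hT : T.Nonempty) {g : ι → X → ℝ} (hgm : ∀ t ∈ T, AEMeasurable (g t) μ) {c : ℝ}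
    (hg : ∀ t ∈ T, ∀ x, |g t x| ≤ c) {n : ℕ} (hn : 0 < n) {δ : ℝ} (hδ0 : 0 < δ) (hδ1 : δ ≤ 1) :
    1 - δ ≤ (Measure.pi fun _ : Fin n => μ).real
      {D | ∀ t ∈ T, |(n : ℝ)⁻¹ * ∑ i, g t (D i) - μ[g t]|
        ≤ c * √(2 * Real.log (2 * T.card / δ) / n)} := by
  set l := Real.log (2 * T.card / δ) with hl
  have hcard : (1 : ℝ) ≤ T.card := by exact_mod_cast hT.card_pos
  have hl0 : 0 ≤ l := Real.log_nonneg (by rw [le_div_iff₀ hδ0]; linarith)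
  have hexp : T.card * (2 * Real.exp (-l)) = δ := by
    rw [Real.exp_neg, hl, Real.exp_log (by positivity)]
    field_simp
  set good := {D : Fin n → X | ∀ t ∈ T, |(n : ℝ)⁻¹ * ∑ i, g t (D i) - μ[g t]|
    ≤ c * √(2 * l / n)} with hgood
  have hbad : goodᶜ = ⋃ t ∈ T, {D : Fin n → X |
      c * √(2 * l / n) < |(n : ℝ)⁻¹ * ∑ i, g t (D i) - μ[g t]|} := by
    ext D; simp [hgood]
  have hbad_le : (Measure.pi fun _ : Fin n => μ).real goodᶜ ≤ δ := by
    rw [hbad, ← hexp, ← nsmul_eq_mul]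
    exact (measureReal_biUnion_finset_le _ _).trans (Finset.sum_le_card_nsmul _ _ _ fun t ht =>
      measureReal_pi_lt_abs_mean_sub_integral_le (hgm t ht) (hg t ht) hn hl0)
  have huniv := measureReal_union_le (μ := Measure.pi fun _ : Fin n => μ) good goodᶜ
  rw [Set.union_compl_self, probReal_univ] at huniv
  linarith

theorem one_sub_add_le_measureReal_prod {Y : Type*} [MeasurableSpace Y] {ν : Measure Y}
    [IsProbabilityMeasure ν] {s : Set X} {t : Set Y} {a b : ℝ} (hs : 1 - a ≤ μ.real s)
    (ht : 1 - b ≤ ν.real t) : 1 - (a + b) ≤ (μ.prod ν).real (s ×ˢ t) := by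
  rw [measureReal_prod_prod]
  nlinarith [measureReal_le_one (μ := μ) (s := s), measureReal_le_one (μ := ν) (s := t)]

end Concentration

section DiscreteMeasure

variable {X : Type*} [Fintype X] [MeasurableSpace X] {p : X → ℝ}

theorem isProbabilityMeasure_discMeasure (hp : p ∈ stdSimplex ℝ X) :
    IsProbabilityMeasure (discMeasure p) := by
  constructor
  simp only [discMeasure, Measure.sum_apply _ MeasurableSet.univ, Measure.smul_apply,
    measure_univ, smul_eq_mul, mul_one, tsum_fintype]
  rw [← ENNReal.ofReal_sum_of_nonneg fun x _ => hp.1 x, hp.2, ENNReal.ofReal_one]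

theorem integral_discMeasure [MeasurableSingletonClass X] (hp : ∀ x, 0 ≤ p x) (g : X → ℝ) :
    ∫ x, g x ∂discMeasure p = ∑ x, p x * g x := by
  rw [discMeasure, integral_sum_dirac fun _ => ENNReal.ofReal_ne_top, tsum_fintype]
  simp only [ENNReal.toReal_ofReal (hp _), smul_eq_mul]

end DiscreteMeasure

section Policy

variable {S A : Type*} [Fintype A] {d d' π π' piD w : S → A → ℝ}

/-- `π(·|s)` is the conditional law of the action under the state-action weight `d`, that is,
`d(s,a) = d(s) π(a|s)`. This leaves `π(·|s)` free at the states with `d(s) = 0`. -/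
def IsConditional (d π : S → A → ℝ) : Prop :=
  ∀ s a, d s a = (∑ a', d s a') * π s a

theorem isPolicy_normPolicy [Nonempty A] (hd : ∀ s a, 0 ≤ d s a) : IsPolicy (normPolicy d) := by
  constructor
  · intro s a
    unfold normPolicy
    split_ifs with hs
    exacts [div_nonneg (hd s a) hs.le, inv_nonneg.2 (Nat.cast_nonneg _)]
  · intro s
    unfold normPolicy
    split_ifs with hs
    · rw [← Finset.sum_div, div_self hs.ne']
    · rw [Finset.sum_const, Finset.card_univ, nsmul_eq_mul,
        mul_inv_cancel₀ (Nat.cast_ne_zero.2 Fintype.card_ne_zero)]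

theorem isConditional_normPolicy (hd : ∀ s a, 0 ≤ d s a) : IsConditional d (normPolicy d) := by
  intro s a
  unfold normPolicy
  split_ifs with hs
  · rw [mul_div_cancel₀ _ hs.ne']
  · have hsum : ∑ a', d s a' = 0 :=
      le_antisymm (not_lt.1 hs) (Finset.sum_nonneg fun a' _ => hd s a')
    rw [hsum, zero_mul]
    exact (Finset.sum_eq_zero_iff_of_nonneg fun a' _ => hd s a').1 hsum a (Finset.mem_univ a)

theorem isPolicy_extractPolicy [Nonempty A] (hpiD : ∀ s a, 0 ≤ piD s a)
    (hw : ∀ s a, 0 ≤ w s a) : IsPolicy (extractPolicy piD w) :=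
  isPolicy_normPolicy fun s a => mul_nonneg (hw s a) (hpiD s a)

theorem isConditional_extractPolicy (hd : IsConditional d piD) (hpiD : ∀ s a, 0 ≤ piD s a)
    (hw : ∀ s a, 0 ≤ w s a) : IsConditional (dstar d w) (extractPolicy piD w) := by
  have hdstar : ∀ s a, dstar d w s a = (∑ a', d s a') * dstar piD w s a := fun s a => by
    simp only [dstar, hd s a]
    ring
  intro s a
  rw [Finset.sum_congr rfl fun a' _ => hdstar s a', ← Finset.mul_sum, mul_assoc, hdstar]
  exact congrArg _ (isConditional_normPolicy (fun s a => mul_nonneg (hw s a) (hpiD s a)) s a)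

namespace IsConditional

theorem sub_eq (hd : IsConditional d π) (hd' : IsConditional d' π') (s : S) (a : A) :
    d s a - d' s a
      = (∑ a', d s a') * (π s a - π' s a) + (∑ a', d s a' - ∑ a', d' s a') * π' s a := by
  rw [hd s a, hd' s a]
  ring

theorem sum_abs_sub_le (hd : IsConditional d π) (hd' : IsConditional d' π')
    (hd0 : ∀ s a, 0 ≤ d s a) (hπ' : IsPolicy π') (s : S) :
    ∑ a, |d s a - d' s a|
      ≤ (∑ a, d s a) * l1Pol π π' s + |∑ a, d s a - ∑ a, d' s a| := by
  have hds : 0 ≤ ∑ a, d s a := Finset.sum_nonneg fun a _ => hd0 s a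
  calc ∑ a, |d s a - d' s a|
      ≤ ∑ a, ((∑ a', d s a') * |π s a - π' s a| + |∑ a', d s a' - ∑ a', d' s a'| * π' s a) :=
        Finset.sum_le_sum fun a _ => by
          rw [hd.sub_eq hd' s a]
          refine (abs_add_le _ _).trans_eq ?_
          rw [abs_mul, abs_mul, abs_of_nonneg hds, abs_of_nonneg (hπ'.1 s a)]
    _ = _ := by rw [Finset.sum_add_distrib, ← Finset.mul_sum, ← Finset.mul_sum, hπ'.2, mul_one]; rfl

theorem sum_mul_l1Pol_le (hd : IsConditional d π) (hd' : IsConditional d' π')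
    (hd0 : ∀ s a, 0 ≤ d s a) (hπ' : IsPolicy π') (s : S) :
    (∑ a, d s a) * l1Pol π π' s
      ≤ ∑ a, |d s a - d' s a| + |∑ a, d s a - ∑ a, d' s a| := by
  have hds : 0 ≤ ∑ a, d s a := Finset.sum_nonneg fun a _ => hd0 s a
  calc (∑ a, d s a) * l1Pol π π' s
      = ∑ a, |(d s a - d' s a) - (∑ a', d s a' - ∑ a', d' s a') * π' s a| := by
        rw [l1Pol, Finset.mul_sum]
        refine Finset.sum_congr rfl fun a _ => ?_
        rw [hd.sub_eq hd' s a, add_sub_cancel_right, abs_mul, abs_of_nonneg hds]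
    _ ≤ ∑ a, (|d s a - d' s a| + |∑ a', d s a' - ∑ a', d' s a'| * π' s a) :=
        Finset.sum_le_sum fun a _ => (abs_sub _ _).trans_eq <| by
          rw [abs_mul, abs_of_nonneg (hπ'.1 s a)]
    _ = _ := by rw [Finset.sum_add_distrib, ← Finset.mul_sum, hπ'.2, mul_one]

theorem expL1_le [Fintype S] (hd : IsConditional d π) (hd' : IsConditional d' π')
    (hd0 : ∀ s a, 0 ≤ d s a) (hπ' : IsPolicy π') :
    expL1 d π π' ≤ 2 * ∑ s, ∑ a, |d s a - d' s a| := by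
  rw [expL1, Finset.mul_sum]
  refine Finset.sum_le_sum fun s _ => (hd.sum_mul_l1Pol_le hd' hd0 hπ' s).trans ?_
  have hmarginal : |∑ a, d s a - ∑ a, d' s a| ≤ ∑ a, |d s a - d' s a| := by
    rw [← Finset.sum_sub_distrib]
    exact Finset.abs_sum_le_sum_abs _ _
  linarith

end IsConditional

end Policy

section NextStateDist

variable {P : S → A → S → ℝ} {d d' : S → A → ℝ}

/-- The law of the next state `s' ∼ P(·|s,a)` when `(s,a) ∼ d`; for `d = d^D` it is the paper's
`d^{D'}`. -/
def nextStateDist (P : S → A → S → ℝ) (d : S → A → ℝ) (s : S) : ℝ :=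
  ∑ s', ∑ a', d s' a' * P s' a' s

theorem bellmanFlow_iff {μ0 : S → ℝ} {γ : ℝ} :
    BellmanFlow P μ0 γ d
      ↔ ∀ s, ∑ a, d s a = (1 - γ) * μ0 s + γ * nextStateDist P d s := by
  simp only [BellmanFlow, nextStateDist, mul_comm]

theorem nextStateDist_sub (s : S) :
    nextStateDist P (fun s a => d s a - d' s a) s = nextStateDist P d s - nextStateDist P d' s := by
  simp only [nextStateDist, sub_mul, Finset.sum_sub_distrib]

theorem nextStateDist_const_mul (c : ℝ) (s : S) :
    nextStateDist P (fun s a => c * d s a) s = c * nextStateDist P d s := by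
  simp only [nextStateDist, mul_assoc, Finset.mul_sum]

theorem nextStateDist_mono (hP : ∀ s a s', 0 ≤ P s a s') (hdd' : ∀ s a, d s a ≤ d' s a) (s : S) :
    nextStateDist P d s ≤ nextStateDist P d' s :=
  Finset.sum_le_sum fun s' _ => Finset.sum_le_sum fun a' _ =>
    mul_le_mul_of_nonneg_right (hdd' s' a') (hP s' a' s)

theorem nextStateDist_nonneg (hP : ∀ s a s', 0 ≤ P s a s') (hd : ∀ s a, 0 ≤ d s a) (s : S) :
    0 ≤ nextStateDist P d s :=
  Finset.sum_nonneg fun s' _ => Finset.sum_nonneg fun a' _ => mul_nonneg (hd s' a') (hP s' a' s)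

theorem abs_nextStateDist_le (hP : ∀ s a s', 0 ≤ P s a s') (s : S) :
    |nextStateDist P d s| ≤ nextStateDist P (fun s a => |d s a|) s := by
  refine (Finset.abs_sum_le_sum_abs _ _).trans (Finset.sum_le_sum fun s' _ =>
    (Finset.abs_sum_le_sum_abs _ _).trans_eq (Finset.sum_congr rfl fun a' _ => ?_))
  rw [abs_mul, abs_of_nonneg (hP s' a' s)]

theorem sum_mul_nextStateDist (v : S → ℝ) :
    ∑ s, v s * nextStateDist P d s = ∑ s, ∑ a, d s a * ∑ s', P s a s' * v s' := by
  simp only [nextStateDist, Finset.mul_sum]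
  rw [Finset.sum_comm]
  refine Finset.sum_congr rfl fun s _ => ?_
  rw [Finset.sum_comm]
  exact Finset.sum_congr rfl fun a _ => Finset.sum_congr rfl fun s' _ => by ring

theorem sum_nextStateDist (hP : ∀ s a, ∑ s', P s a s' = 1) :
    ∑ s, nextStateDist P d s = ∑ s, ∑ a, d s a := by
  simpa only [one_mul, mul_one, hP] using sum_mul_nextStateDist (P := P) (d := d) fun _ => 1

end NextStateDist

section Occupancy

theorem single_le_sum_sum {g : S → A → ℝ} (hg : ∀ s a, 0 ≤ g s a) (s : S) (a : A) :
    g s a ≤ ∑ s, ∑ a, g s a :=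
  (Finset.single_le_sum (fun a _ => hg s a) (Finset.mem_univ a)).trans
    (Finset.single_le_sum (f := fun s => ∑ a, g s a)
      (fun s _ => Finset.sum_nonneg fun a _ => hg s a) (Finset.mem_univ s))

variable {P : S → A → S → ℝ} {μ0 : S → ℝ} {γ : ℝ} {d d' π π' : S → A → ℝ}

theorem sum_saDist_zero (hπ : IsPolicy π) (s : S) : ∑ a, saDist P μ0 π 0 s a = μ0 s := by
  simp only [saDist, ← Finset.mul_sum, hπ.2, mul_one]

theorem sum_saDist_succ (hπ : IsPolicy π) (t : ℕ) (s : S) :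
    ∑ a, saDist P μ0 π (t + 1) s a = nextStateDist P (saDist P μ0 π t) s := by
  simp only [saDist, ← Finset.mul_sum, hπ.2, mul_one, nextStateDist]

theorem isConditional_saDist (hπ : IsPolicy π) (t : ℕ) : IsConditional (saDist P μ0 π t) π := by
  intro s a
  cases t with
  | zero => rw [sum_saDist_zero hπ, saDist]
  | succ t => rw [sum_saDist_succ hπ, saDist, nextStateDist]

theorem saDist_nonneg (hP : ∀ s a s', 0 ≤ P s a s') (hμ0 : ∀ s, 0 ≤ μ0 s) (hπ : IsPolicy π)
    (t : ℕ) (s : S) (a : A) : 0 ≤ saDist P μ0 π t s a := by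
  induction t generalizing s a with
  | zero => exact mul_nonneg (hμ0 s) (hπ.1 s a)
  | succ t ih => exact mul_nonneg (nextStateDist_nonneg hP ih s) (hπ.1 s a)

theorem sum_sum_saDist (hP : ∀ s a, ∑ s', P s a s' = 1) (hπ : IsPolicy π) (t : ℕ) :
    ∑ s, ∑ a, saDist P μ0 π t s a = ∑ s, μ0 s := by
  induction t with
  | zero => exact Finset.sum_congr rfl fun s _ => sum_saDist_zero hπ s
  | succ t ih => simp only [sum_saDist_succ hπ, sum_nextStateDist hP, ih]

theorem saDist_le_one (hP : ∀ s a, P s a ∈ stdSimplex ℝ S) (hμ0 : μ0 ∈ stdSimplex ℝ S)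
    (hπ : IsPolicy π) (t : ℕ) (s : S) (a : A) : saDist P μ0 π t s a ≤ 1 := by
  rw [← hμ0.2, ← sum_sum_saDist (fun s a => (hP s a).2) hπ t]
  exact single_le_sum_sum (saDist_nonneg (fun s a => (hP s a).1) hμ0.1 hπ t) s a

theorem hasSum_occ (hP : ∀ s a, P s a ∈ stdSimplex ℝ S) (hμ0 : μ0 ∈ stdSimplex ℝ S)
    (hγ : γ ∈ Set.Ico (0 : ℝ) 1) (hπ : IsPolicy π) (s : S) (a : A) :
    HasSum (fun t => (1 - γ) * (γ ^ t * saDist P μ0 π t s a)) (occ P μ0 γ π s a) := by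
  refine (Summable.of_nonneg_of_le (fun t => ?_) (fun t => ?_)
    (summable_geometric_of_lt_one hγ.1 hγ.2)).hasSum.mul_left _
  · exact mul_nonneg (pow_nonneg hγ.1 t) (saDist_nonneg (fun s a => (hP s a).1) hμ0.1 hπ t s a)
  · exact mul_le_of_le_one_right (pow_nonneg hγ.1 t) (saDist_le_one hP hμ0 hπ t s a)

theorem hasSum_sum_occ (hP : ∀ s a, P s a ∈ stdSimplex ℝ S) (hμ0 : μ0 ∈ stdSimplex ℝ S)
    (hγ : γ ∈ Set.Ico (0 : ℝ) 1) (hπ : IsPolicy π) (s : S) :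
    HasSum (fun t => (1 - γ) * (γ ^ t * ∑ a, saDist P μ0 π t s a)) (∑ a, occ P μ0 γ π s a) := by
  simp only [Finset.mul_sum]
  exact hasSum_sum fun a _ => hasSum_occ hP hμ0 hγ hπ s a

theorem isConditional_occ (hP : ∀ s a, P s a ∈ stdSimplex ℝ S) (hμ0 : μ0 ∈ stdSimplex ℝ S)
    (hγ : γ ∈ Set.Ico (0 : ℝ) 1) (hπ : IsPolicy π) : IsConditional (occ P μ0 γ π) π := by
  intro s a
  refine (hasSum_occ hP hμ0 hγ hπ s a).unique ?_
  simpa only [isConditional_saDist hπ _ s a, mul_assoc] using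
    (hasSum_sum_occ hP hμ0 hγ hπ s).mul_right (π s a)

theorem bellmanFlow_occ (hP : ∀ s a, P s a ∈ stdSimplex ℝ S) (hμ0 : μ0 ∈ stdSimplex ℝ S)
    (hγ : γ ∈ Set.Ico (0 : ℝ) 1) (hπ : IsPolicy π) : BellmanFlow P μ0 γ (occ P μ0 γ π) := by
  refine bellmanFlow_iff.2 fun s => ?_
  have hnext : HasSum
      (fun t => γ * ∑ s', ∑ a', (1 - γ) * (γ ^ t * saDist P μ0 π t s' a') * P s' a' s)
      (γ * nextStateDist P (occ P μ0 γ π) s) :=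
    (hasSum_sum fun s' _ => hasSum_sum fun a' _ =>
      (hasSum_occ hP hμ0 hγ hπ s' a').mul_right (P s' a' s)).mul_left γ
  have htail : HasSum (fun t => (1 - γ) * (γ ^ (t + 1) * ∑ a, saDist P μ0 π (t + 1) s a))
      (γ * nextStateDist P (occ P μ0 γ π) s) := by
    refine hnext.congr_fun fun t => ?_
    simp only [sum_saDist_succ hπ, nextStateDist, Finset.mul_sum]
    exact Finset.sum_congr rfl fun s' _ => Finset.sum_congr rfl fun a' _ => by ring
  have hhead := htail.zero_add (f := fun t => (1 - γ) * (γ ^ t * ∑ a, saDist P μ0 π t s a))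
  rw [pow_zero, one_mul, sum_saDist_zero hπ] at hhead
  exact (hasSum_sum_occ hP hμ0 hγ hπ s).unique hhead

theorem BellmanFlow.sum_abs_sum_sub_le (hP : ∀ s a, P s a ∈ stdSimplex ℝ S) (hγ : 0 ≤ γ)
    (hd : BellmanFlow P μ0 γ d) (hd' : BellmanFlow P μ0 γ d') :
    ∑ s, |∑ a, d s a - ∑ a, d' s a| ≤ γ * ∑ s, ∑ a, |d s a - d' s a| := by
  rw [← sum_nextStateDist fun s a => (hP s a).2, Finset.mul_sum]
  refine Finset.sum_le_sum fun s _ => ?_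
  rw [bellmanFlow_iff.1 hd s, bellmanFlow_iff.1 hd' s, add_sub_add_left_eq_sub, ← mul_sub,
    ← nextStateDist_sub, abs_mul, abs_of_nonneg hγ]
  exact mul_le_mul_of_nonneg_left (abs_nextStateDist_le (fun s a => (hP s a).1) s) hγ

theorem BellmanFlow.mul_sum_abs_sub_le_expL1 (hP : ∀ s a, P s a ∈ stdSimplex ℝ S) (hγ : 0 ≤ γ)
    (hd : BellmanFlow P μ0 γ d) (hd' : BellmanFlow P μ0 γ d') (hdπ : IsConditional d π)
    (hdπ' : IsConditional d' π') (hd0 : ∀ s a, 0 ≤ d s a) (hπ' : IsPolicy π') :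
    (1 - γ) * ∑ s, ∑ a, |d s a - d' s a| ≤ expL1 d π π' := by
  have hcontract := hd.sum_abs_sum_sub_le hP hγ hd'
  have hsplit : ∑ s, ∑ a, |d s a - d' s a|
      ≤ expL1 d π π' + ∑ s, |∑ a, d s a - ∑ a, d' s a| := by
    rw [expL1, ← Finset.sum_add_distrib]
    exact Finset.sum_le_sum fun s _ => hdπ.sum_abs_sub_le hdπ' hd0 hπ' s
  linarith

theorem BellmanFlow.eq_occ (hP : ∀ s a, P s a ∈ stdSimplex ℝ S) (hμ0 : μ0 ∈ stdSimplex ℝ S)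
    (hγ : γ ∈ Set.Ico (0 : ℝ) 1) (hd : BellmanFlow P μ0 γ d) (hdπ : IsConditional d π)
    (hd0 : ∀ s a, 0 ≤ d s a) (hπ : IsPolicy π) : d = occ P μ0 γ π := by
  have hstable := hd.mul_sum_abs_sub_le_expL1 hP hγ.1 (bellmanFlow_occ hP hμ0 hγ hπ) hdπ
    (isConditional_occ hP hμ0 hγ hπ) hd0 hπ
  simp only [expL1, l1Pol, sub_self, abs_zero, Finset.sum_const_zero, mul_zero] at hstable
  have hsum : ∑ s, ∑ a, |d s a - occ P μ0 γ π s a| ≤ 0 :=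
    nonpos_of_mul_nonpos_right hstable (sub_pos.2 hγ.2)
  ext s a
  exact sub_eq_zero.1 (abs_nonpos_iff.1 ((single_le_sum_sum
    (g := fun s a => |d s a - occ P μ0 γ π s a|) (fun _ _ => abs_nonneg _) s a).trans hsum))

theorem abs_Jret_sub_le_expL1 {r : S → A → ℝ} (hP : ∀ s a, P s a ∈ stdSimplex ℝ S)
    (hμ0 : μ0 ∈ stdSimplex ℝ S) (hγ : γ ∈ Set.Ico (0 : ℝ) 1) (hr : ∀ s a, |r s a| ≤ 1)
    (hd : BellmanFlow P μ0 γ d) (hdπ : IsConditional d π) (hd0 : ∀ s a, 0 ≤ d s a)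
    (hπ : IsPolicy π) (hπ' : IsPolicy π') :
    |Jret P r μ0 γ π - Jret P r μ0 γ π'| ≤ 1 / (1 - γ) * expL1 d π π' := by
  rw [div_mul_eq_mul_div, one_mul, le_div_iff₀' (sub_pos.2 hγ.2)]
  refine le_trans (mul_le_mul_of_nonneg_left ?_ (sub_nonneg.2 hγ.2.le))
    (hd.mul_sum_abs_sub_le_expL1 hP hγ.1 (bellmanFlow_occ hP hμ0 hγ hπ') hdπ
      (isConditional_occ hP hμ0 hγ hπ') hd0 hπ')
  rw [Jret, Jret, ← hd.eq_occ hP hμ0 hγ hdπ hd0 hπ, ← Finset.sum_sub_distrib]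
  refine (Finset.abs_sum_le_sum_abs _ _).trans (Finset.sum_le_sum fun s _ => ?_)
  rw [← Finset.sum_sub_distrib]
  refine (Finset.abs_sum_le_sum_abs _ _).trans (Finset.sum_le_sum fun a _ => ?_)
  rw [← sub_mul, abs_mul]
  exact mul_le_of_le_one_right (abs_nonneg _) (hr s a)

end Occupancy

section Lagrangian

variable {P : S → A → S → ℝ} {r : S → A → ℝ} {μ0 : S → ℝ} {γ : ℝ} {dD : S → A → ℝ}
  {f : ℝ → ℝ} {α : ℝ} {v : S → ℝ} {d w w' : S → A → ℝ}

local notation "𝓛" => Lag P r μ0 γ dD f α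

/-- The defect of `d` in the Bellman flow equations; at `d = w·d^D` it is the gradient of
`L_α(·, w)`. -/
noncomputable def flowResidual (P : S → A → S → ℝ) (μ0 : S → ℝ) (γ : ℝ) (d : S → A → ℝ)
    (s : S) : ℝ :=
  (1 - γ) * μ0 s + γ * nextStateDist P d s - ∑ a, d s a

/-- The error `‖v − v'‖_{1,μ0} + ‖v − v'‖_{1,d^D} + ‖v − v'‖_{1,d^{D'}}` of a value function;
`ε_{α,r,v}` is its minimum over `V` at `v' = v*_α`. -/
noncomputable def valueErr (P : S → A → S → ℝ) (μ0 : S → ℝ) (dD : S → A → ℝ)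
    (v v' : S → ℝ) : ℝ :=
  (∑ s, μ0 s * |v s - v' s|) + (∑ s, (∑ a, dD s a) * |v s - v' s|)
    + ∑ s, nextStateDist P dD s * |v s - v' s|

/-- The error `‖w − w'‖_{1,d^D}` of a density ratio; `ε_{α,r,w}` is its minimum over `W` at
`w' = w*_α`. -/
noncomputable def ratioErr (dD w w' : S → A → ℝ) : ℝ :=
  ∑ s, ∑ a, dD s a * |w s a - w' s a|

theorem bellmanFlow_iff_flowResidual_eq_zero :
    BellmanFlow P μ0 γ d ↔ ∀ s, flowResidual P μ0 γ d s = 0 := by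
  simp only [bellmanFlow_iff, flowResidual, sub_eq_zero]
  exact forall_congr' fun s => eq_comm

theorem sum_mul_flowResidual (v : S → ℝ) :
    ∑ s, v s * flowResidual P μ0 γ d s
      = (1 - γ) * ∑ s, μ0 s * v s
        + ∑ s, ∑ a, d s a * (γ * ∑ s', P s a s' * v s' - v s) := by
  calc ∑ s, v s * flowResidual P μ0 γ d s
      = (1 - γ) * ∑ s, μ0 s * v s + γ * ∑ s, v s * nextStateDist P d s
          - ∑ s, ∑ a, d s a * v s := by
        simp only [flowResidual, Finset.mul_sum, ← Finset.sum_mul, ← Finset.sum_add_distrib,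
          ← Finset.sum_sub_distrib]
        exact Finset.sum_congr rfl fun s _ => by ring
    _ = _ := by
        rw [sum_mul_nextStateDist, add_sub_assoc]
        simp only [mul_sub, Finset.sum_sub_distrib, mul_left_comm, Finset.mul_sum]

theorem Lag_eq_sum (v : S → ℝ) (w : S → A → ℝ) :
    𝓛 v w = (1 - γ) * ∑ s, μ0 s * v s
      + ∑ s, ∑ a, dD s a * (w s a * eV P r γ v s a - α * f (w s a)) := by
  simp only [Lag, mul_sub, Finset.sum_sub_distrib, Finset.mul_sum, mul_left_comm α]
  ring

theorem Lag_eq_sum_mul_flowResidual (v : S → ℝ) (w : S → A → ℝ) :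
    𝓛 v w = ∑ s, v s * flowResidual P μ0 γ (dstar dD w) s
      + ∑ s, ∑ a, dD s a * (w s a * r s a - α * f (w s a)) := by
  rw [Lag_eq_sum, sum_mul_flowResidual, add_assoc]
  simp only [← Finset.sum_add_distrib]
  refine congrArg _ (Finset.sum_congr rfl fun s _ => Finset.sum_congr rfl fun a _ => ?_)
  rw [eV, dstar]
  ring

theorem Lag_sub_left (v v' : S → ℝ) (w : S → A → ℝ) :
    𝓛 v' w - 𝓛 v w = ∑ s, (v' s - v s) * flowResidual P μ0 γ (dstar dD w) s := by
  simp only [Lag_eq_sum_mul_flowResidual, add_sub_add_right_eq_sub, sub_mul,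
    Finset.sum_sub_distrib]

theorem bellmanFlow_of_forall_Lag_le (h : ∀ v', 𝓛 v w ≤ 𝓛 v' w) :
    BellmanFlow P μ0 γ (dstar dD w) := by
  set c := flowResidual P μ0 γ (dstar dD w) with hc
  have hstep : 𝓛 (fun s => v s - c s) w - 𝓛 v w = -∑ s, c s ^ 2 := by
    rw [Lag_sub_left, ← Finset.sum_neg_distrib]
    exact Finset.sum_congr rfl fun s _ => by rw [← hc]; ring
  have hsq : ∑ s, c s ^ 2 = 0 :=
    le_antisymm (by linarith [h fun s => v s - c s]) (Finset.sum_nonneg fun s _ => sq_nonneg _)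
  refine bellmanFlow_iff_flowResidual_eq_zero.2 fun s => pow_eq_zero_iff two_ne_zero |>.1 ?_
  exact (Finset.sum_eq_zero_iff_of_nonneg fun s _ => sq_nonneg (c s)).1 hsq s (Finset.mem_univ s)

theorem BellmanFlow.Lag_eq (h : BellmanFlow P μ0 γ (dstar dD w)) (v v' : S → ℝ) :
    𝓛 v w = 𝓛 v' w := by
  rw [← sub_eq_zero, Lag_sub_left]
  simp only [bellmanFlow_iff_flowResidual_eq_zero.1 h, mul_zero, Finset.sum_const_zero]

theorem abs_flowResidual_le (hP : ∀ s a s', 0 ≤ P s a s') (hμ0 : ∀ s, 0 ≤ μ0 s)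
    (hγ : γ ∈ Set.Icc (0 : ℝ) 1) (hdD : ∀ s a, 0 ≤ dD s a) {B : ℝ} (hB : 0 ≤ B)
    (hd0 : ∀ s a, 0 ≤ d s a) (hdB : ∀ s a, d s a ≤ B * dD s a) (s : S) :
    |flowResidual P μ0 γ d s| ≤ (B + 1) * (μ0 s + ∑ a, dD s a + nextStateDist P dD s) := by
  have hinit := mul_le_of_le_one_left (hμ0 s) (sub_le_self 1 hγ.1)
  have hinit0 := mul_nonneg (sub_nonneg.2 hγ.2) (hμ0 s)
  have hmarginal : ∑ a, d s a ≤ B * ∑ a, dD s a := by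
    rw [Finset.mul_sum]
    exact Finset.sum_le_sum fun a _ => hdB s a
  have hmarginal0 : 0 ≤ ∑ a, d s a := Finset.sum_nonneg fun a _ => hd0 s a
  have hnext : nextStateDist P d s ≤ B * nextStateDist P dD s := by
    rw [← nextStateDist_const_mul]
    exact nextStateDist_mono hP hdB s
  have hnext0 := mul_nonneg hγ.1 (nextStateDist_nonneg hP hd0 s)
  have hnext1 := mul_le_of_le_one_left (nextStateDist_nonneg hP hd0 s) hγ.2
  have hdD0 : 0 ≤ ∑ a, dD s a := Finset.sum_nonneg fun a _ => hdD s a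
  have hnextD0 := nextStateDist_nonneg hP hdD s
  have hBμ0 := mul_nonneg hB (hμ0 s)
  rw [flowResidual, abs_le]
  constructor <;> nlinarith

theorem abs_Lag_sub_left_le (hP : ∀ s a s', 0 ≤ P s a s') (hμ0 : ∀ s, 0 ≤ μ0 s)
    (hγ : γ ∈ Set.Icc (0 : ℝ) 1) (hdD : ∀ s a, 0 ≤ dD s a) {B : ℝ} (hB : 0 ≤ B)
    (hw : ∀ s a, w s a ∈ Set.Icc 0 B) (v v' : S → ℝ) :
    |𝓛 v w - 𝓛 v' w| ≤ (B + 1) * valueErr P μ0 dD v v' := by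
  have hresidual := abs_flowResidual_le hP hμ0 hγ hdD hB
    (fun s a => mul_nonneg (hw s a).1 (hdD s a))
    (fun s a => mul_le_mul_of_nonneg_right (hw s a).2 (hdD s a))
  rw [Lag_sub_left, valueErr, ← Finset.sum_add_distrib, ← Finset.sum_add_distrib, Finset.mul_sum]
  refine (Finset.abs_sum_le_sum_abs _ _).trans (Finset.sum_le_sum fun s _ => ?_)
  rw [← add_mul, ← add_mul, ← mul_assoc, mul_comm (v s - v' s), abs_mul]
  exact mul_le_mul_of_nonneg_right (hresidual s) (abs_nonneg _)

theorem abs_Lag_sub_right_le (hα : 0 ≤ α) (hdD : ∀ s a, 0 ≤ dD s a) {B K : ℝ}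
    (he : ∀ s a, |eV P r γ v s a| ≤ B)
    (hf : ∀ s a, 0 < dD s a → |f (w s a) - f (w' s a)| ≤ K * |w s a - w' s a|) :
    |𝓛 v w - 𝓛 v w'| ≤ (B + α * K) * ratioErr dD w w' := by
  rw [Lag_eq_sum, Lag_eq_sum, add_sub_add_left_eq_sub, ratioErr, Finset.mul_sum]
  simp only [Finset.mul_sum, ← Finset.sum_sub_distrib]
  refine (Finset.abs_sum_le_sum_abs _ _).trans (Finset.sum_le_sum fun s _ =>
    (Finset.abs_sum_le_sum_abs _ _).trans (Finset.sum_le_sum fun a _ => ?_))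
  rcases (hdD s a).eq_or_lt with h0 | hpos
  · rw [← h0]; simp
  have hresidual : |(w s a - w' s a) * eV P r γ v s a| ≤ B * |w s a - w' s a| := by
    rw [abs_mul, mul_comm]
    exact mul_le_mul_of_nonneg_right (he s a) (abs_nonneg _)
  have hreg : |α * (f (w s a) - f (w' s a))| ≤ α * (K * |w s a - w' s a|) := by
    rw [abs_mul, abs_of_nonneg hα]
    exact mul_le_mul_of_nonneg_left (hf s a hpos) hα
  calc |dD s a * (w s a * eV P r γ v s a - α * f (w s a))
        - dD s a * (w' s a * eV P r γ v s a - α * f (w' s a))|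
      = dD s a * |(w s a - w' s a) * eV P r γ v s a - α * (f (w s a) - f (w' s a))| := by
        rw [← abs_of_pos hpos, ← abs_mul, abs_of_pos hpos]
        ring_nf
    _ ≤ dD s a * (B * |w s a - w' s a| + α * (K * |w s a - w' s a|)) :=
        mul_le_mul_of_nonneg_left ((abs_sub _ _).trans (add_le_add hresidual hreg)) hpos.le
    _ = _ := by ring

theorem add_le_Lag_combo (hα : 0 ≤ α) (hdD : ∀ s a, 0 ≤ dD s a) {K : Set ℝ} {m : ℝ}
    (hf : StrongConvexOn K m f) (hw : ∀ s a, w s a ∈ K) (hw' : ∀ s a, w' s a ∈ K)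
    {t : ℝ} (ht : t ∈ Set.Icc (0 : ℝ) 1) :
    (1 - t) * 𝓛 v w + t * 𝓛 v w'
        + (1 - t) * t * (α * m / 2 * ∑ s, ∑ a, dD s a * (w' s a - w s a) ^ 2)
      ≤ 𝓛 v (fun s a => (1 - t) * w s a + t * w' s a) := by
  have hpoint : ∀ s a, (1 - t) * (w s a * eV P r γ v s a - α * f (w s a))
      + t * (w' s a * eV P r γ v s a - α * f (w' s a))
      + (1 - t) * t * (α * m / 2 * (w' s a - w s a) ^ 2)
      ≤ ((1 - t) * w s a + t * w' s a) * eV P r γ v s a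
        - α * f ((1 - t) * w s a + t * w' s a) := fun s a => by
    have hconv := hf.2 (hw s a) (hw' s a) (sub_nonneg.2 ht.2) ht.1 (sub_add_cancel 1 t)
    simp only [smul_eq_mul, Real.norm_eq_abs, sq_abs] at hconv
    linarith [mul_le_mul_of_nonneg_left hconv hα]
  have hsum := Finset.sum_le_sum fun s (_ : s ∈ Finset.univ) => Finset.sum_le_sum
    fun a (_ : a ∈ Finset.univ) => mul_le_mul_of_nonneg_left (hpoint s a) (hdD s a)
  simp only [mul_add, Finset.sum_add_distrib, mul_left_comm (dD _ _), ← Finset.mul_sum] at hsum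
  simp only [Lag_eq_sum]
  linarith

theorem mul_sum_sq_le_Lag_sub (hα : 0 ≤ α) (hdD : ∀ s a, 0 ≤ dD s a) {K : Set ℝ} {m : ℝ}
    (hf : StrongConvexOn K m f) (hw : ∀ s a, w s a ∈ K) (hw' : ∀ s a, w' s a ∈ K)
    (hmax : ∀ w', (∀ s a, w' s a ∈ K) → 𝓛 v w' ≤ 𝓛 v w) :
    α * m / 2 * ∑ s, ∑ a, dD s a * (w' s a - w s a) ^ 2 ≤ 𝓛 v w - 𝓛 v w' := by
  set N := α * m / 2 * ∑ s, ∑ a, dD s a * (w' s a - w s a) ^ 2 with hN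
  have hsegment : ∀ t ∈ Set.Ioo (0 : ℝ) 1, (1 - t) * N ≤ 𝓛 v w - 𝓛 v w' := fun t ht => by
    have hcombo := add_le_Lag_combo (P := P) (r := r) (μ0 := μ0) (γ := γ) (v := v) hα hdD hf hw hw'
      (Set.Ioo_subset_Icc_self ht)
    have hopt := hmax (fun s a => (1 - t) * w s a + t * w' s a) fun s a =>
      hf.1 (hw s a) (hw' s a) (sub_nonneg.2 ht.2.le) ht.1.le (sub_add_cancel 1 t)
    rw [← hN] at hcombo
    refine le_of_mul_le_mul_left ?_ ht.1
    linarith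
  have hlim : Filter.Tendsto (fun t : ℝ => (1 - t) * N) (nhdsWithin 0 (Set.Ioi 0)) (nhds N) := by
    have hcont : Continuous fun t : ℝ => (1 - t) * N := by fun_prop
    simpa only [sub_zero, one_mul] using (hcont.tendsto 0).mono_left nhdsWithin_le_nhds
  exact le_of_tendsto hlim (Filter.mem_of_superset (Ioo_mem_nhdsGT zero_lt_one) hsegment)

end Lagrangian

section DensityRatio

variable {dD π π' w w' : S → A → ℝ}

theorem l2nrm_sq (hdD : ∀ s a, 0 ≤ dD s a) (g : S → A → ℝ) :
    l2nrm dD g ^ 2 = ∑ s, ∑ a, dD s a * g s a ^ 2 :=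
  Real.sq_sqrt (Finset.sum_nonneg fun s _ => Finset.sum_nonneg fun a _ =>
    mul_nonneg (hdD s a) (sq_nonneg _))

theorem ratioErr_le_l2nrm (hdD : ∀ s a, 0 ≤ dD s a) (hdD1 : ∑ s, ∑ a, dD s a = 1)
    (w w' : S → A → ℝ) : ratioErr dD w w' ≤ l2nrm dD fun s a => w s a - w' s a := by
  refine Real.le_sqrt_of_sq_le ?_
  have hcauchy := Finset.sum_sq_le_sum_mul_sum_of_sq_le_mul (Finset.univ : Finset (S × A))
    (r := fun x => dD x.1 x.2 * |w x.1 x.2 - w' x.1 x.2|) (f := fun x => dD x.1 x.2)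
    (g := fun x => dD x.1 x.2 * (w x.1 x.2 - w' x.1 x.2) ^ 2) (fun x _ => hdD _ _)
    (fun x _ => mul_nonneg (hdD _ _) (sq_nonneg _))
    (fun x _ => le_of_eq (by rw [mul_pow, sq_abs]; ring))
  simpa only [ratioErr, Fintype.sum_prod_type, hdD1, one_mul] using hcauchy

theorem expL1_dstar_le (hdD : ∀ s a, 0 ≤ dD s a) (hw : ∀ s a, 0 ≤ w s a)
    (hπ : IsConditional (dstar dD w) π) (hπ' : IsConditional (dstar dD w') π')
    (hpol : IsPolicy π') : expL1 (dstar dD w) π π' ≤ 2 * ratioErr dD w' w := by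
  refine (hπ.expL1_le hπ' (fun s a => mul_nonneg (hw s a) (hdD s a)) hpol).trans_eq ?_
  refine congrArg _ (Finset.sum_congr rfl fun s _ => Finset.sum_congr rfl fun a _ => ?_)
  rw [dstar, dstar, ← sub_mul, abs_mul, abs_of_nonneg (hdD s a), abs_sub_comm, mul_comm]

end DensityRatio

section Boundedness

variable {S A : Type*} [Fintype S] {P : S → A → S → ℝ} {r : S → A → ℝ} {γ : ℝ} {f f' : ℝ → ℝ}

theorem abs_add_mul_sub_le {x y z B : ℝ} (hγ : 0 ≤ γ) (hx : |x| ≤ 1) (hy : |y| ≤ B)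
    (hz : |z| ≤ B) : |x + γ * y - z| ≤ (1 + γ) * B + 1 := by
  have hγy : |γ * y| ≤ γ * B := by
    rw [abs_mul, abs_of_nonneg hγ]
    exact mul_le_mul_of_nonneg_left hy hγ
  calc |x + γ * y - z| ≤ |x| + |γ * y| + |z| :=
        (abs_sub _ _).trans (add_le_add_left (abs_add_le _ _) _)
    _ ≤ (1 + γ) * B + 1 := by linarith

theorem abs_eV_le (hP : ∀ s a, P s a ∈ stdSimplex ℝ S) (hγ : 0 ≤ γ) (hr : ∀ s a, |r s a| ≤ 1)
    {v : S → ℝ} {B : ℝ} (hv : ∀ s, |v s| ≤ B) (s : S) (a : A) :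
    |eV P r γ v s a| ≤ (1 + γ) * B + 1 := by
  refine abs_add_mul_sub_le hγ (hr s a) (abs_le.2 ?_) (hv s)
  exact (convex_Icc (-B) B).sum_mem (fun s' _ => (hP s a).1 s') (hP s a).2
    fun s' _ => abs_le.1 (hv s')

theorem RegAssumptions.abs_sub_le {Mf Bw Bf' Bf x y : ℝ} (hreg : RegAssumptions f f' Mf Bw Bf' Bf)
    (hx : x ∈ Set.Icc 0 Bw) (hy : y ∈ Set.Icc 0 Bw) : |f x - f y| ≤ Bf' * |x - y| :=
  (convex_Icc 0 Bw).norm_image_sub_le_of_norm_hasDerivWithin_le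
    (fun z _ => (hreg.deriv z).hasDerivWithinAt) (fun z hz => hreg.f'_bdd z hz.1 hz.2) hy hx

end Boundedness

section SampleLag

variable {S A : Type*} {r : S → A → ℝ} {γ : ℝ} {f : ℝ → ℝ} {α : ℝ}

/-- The contribution of a single transition to the empirical Lagrangian. -/
noncomputable def sampleLag (r : S → A → ℝ) (γ : ℝ) (f : ℝ → ℝ) (α : ℝ) (v : S → ℝ)
    (w : S → A → ℝ) (x : (S × A) × S) : ℝ :=
  w x.1.1 x.1.2 * (r x.1.1 x.1.2 + γ * v x.2 - v x.1.1) - α * f (w x.1.1 x.1.2)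

theorem empLag_eq {n n0 : ℕ} (D : Fin n → (S × A) × S) (D0 : Fin n0 → S) (v : S → ℝ)
    (w : S → A → ℝ) :
    empLag r γ f α D D0 v w = (1 - γ) * ((n0 : ℝ)⁻¹ * ∑ j, v (D0 j))
      + (n : ℝ)⁻¹ * ∑ i, sampleLag r γ f α v w (D i) := by
  simp only [empLag, sampleLag, Finset.sum_sub_distrib, ← Finset.mul_sum]
  ring

theorem abs_sampleLag_le (hγ : 0 ≤ γ) (hα : 0 ≤ α) (hr : ∀ s a, |r s a| ≤ 1) {Bw Bf Bv : ℝ}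
    (hf : ∀ x, 0 ≤ x → x ≤ Bw → |f x| ≤ Bf) {v : S → ℝ} (hv : ∀ s, |v s| ≤ Bv)
    {w : S → A → ℝ} (hw : ∀ s a, 0 ≤ w s a ∧ w s a ≤ Bw) (x : (S × A) × S) :
    |sampleLag r γ f α v w x| ≤ α * Bf + Bw * ((1 + γ) * Bv + 1) := by
  obtain ⟨⟨s, a⟩, s'⟩ := x
  obtain ⟨hw0, hwB⟩ := hw s a
  rw [add_comm]
  refine (abs_sub _ _).trans (add_le_add ?_ ?_)
  · rw [abs_mul, abs_of_nonneg hw0]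
    exact mul_le_mul hwB (abs_add_mul_sub_le hγ (hr s a) (hv s') (hv s)) (abs_nonneg _)
      (hw0.trans hwB)
  · rw [abs_mul, abs_of_nonneg hα]
    exact mul_le_mul_of_nonneg_left (hf _ hw0 hwB) hα

end SampleLag

section UniformConvergence

variable {P : S → A → S → ℝ} {r : S → A → ℝ} {μ0 : S → ℝ} {γ : ℝ} {dD : S → A → ℝ}
  {f : ℝ → ℝ} {α : ℝ}

theorem tupleWeight_mem_stdSimplex (hP : ∀ s a, P s a ∈ stdSimplex ℝ S)
    (hdD : ∀ s a, 0 ≤ dD s a) (hdD1 : ∑ s, ∑ a, dD s a = 1) :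
    tupleWeight P dD ∈ stdSimplex ℝ ((S × A) × S) := by
  refine ⟨fun x => mul_nonneg (hdD _ _) ((hP _ _).1 _), ?_⟩
  simp only [tupleWeight, Fintype.sum_prod_type, ← Finset.mul_sum, (hP _ _).2, mul_one, hdD1]

theorem Lag_eq_sum_tupleWeight (hP : ∀ s a, ∑ s', P s a s' = 1) (v : S → ℝ) (w : S → A → ℝ) :
    Lag P r μ0 γ dD f α v w
      = (1 - γ) * ∑ s, μ0 s * v s + ∑ x, tupleWeight P dD x * sampleLag r γ f α v w x := by
  rw [Lag_eq_sum]
  simp only [Fintype.sum_prod_type]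
  refine congrArg _ (Finset.sum_congr rfl fun s _ => Finset.sum_congr rfl fun a _ => ?_)
  calc dD s a * (w s a * eV P r γ v s a - α * f (w s a))
      = dD s a * ((w s a * (r s a - v s) - α * f (w s a)) * ∑ s', P s a s'
          + w s a * γ * ∑ s', P s a s' * v s') := by rw [hP, eV]; ring
    _ = ∑ s', dD s a * ((w s a * (r s a - v s) - α * f (w s a)) * P s a s'
          + w s a * γ * (P s a s' * v s')) := by
        simp only [Finset.mul_sum, Finset.sum_add_distrib, mul_add]
    _ = _ := Finset.sum_congr rfl fun s' _ => by simp only [tupleWeight, sampleLag]; ring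

variable [MeasurableSpace S] [MeasurableSpace A] [MeasurableSingletonClass S]
  [MeasurableSingletonClass A]

theorem le_dataMeasure_forall_abs_empLag_sub_le (hP : ∀ s a, P s a ∈ stdSimplex ℝ S)
    (hμ0 : μ0 ∈ stdSimplex ℝ S) (hγ : γ ≤ 1) (hdD : ∀ s a, 0 ≤ dD s a)
    (hdD1 : ∑ s, ∑ a, dD s a = 1) {V : Finset (S → ℝ)} {W : Finset (S → A → ℝ)}
    (hV : V.Nonempty) (hW : W.Nonempty) {Bv Bf Bw Be : ℝ} (hVB : ∀ v ∈ V, ∀ s, |v s| ≤ Bv)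
    (hsample : ∀ v ∈ V, ∀ w ∈ W, ∀ x, |sampleLag r γ f α v w x| ≤ α * Bf + Bw * Be)
    {n n0 : ℕ} (hn : 0 < n) (hn0 : 0 < n0) {δ : ℝ} (hδ0 : 0 < δ) (hδ1 : δ < 1) :
    1 - ENNReal.ofReal δ ≤ dataMeasure P dD μ0 n n0 {ω | ∀ v ∈ V, ∀ w ∈ W,
      |empLag r γ f α ω.1 ω.2 v w - Lag P r μ0 γ dD f α v w|
        ≤ epsStat γ α Bv Bf Bw Be δ V.card W.card n n0} := by
  have htuple := tupleWeight_mem_stdSimplex hP hdD hdD1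
  have := isProbabilityMeasure_discMeasure hμ0
  have := isProbabilityMeasure_discMeasure htuple
  have hinitial := le_measureReal_pi_forall_abs_mean_sub_integral_le (μ := discMeasure μ0) hV
    (g := fun v s => v s) (fun v _ => (measurable_of_finite v).aemeasurable) hVB hn0
    (half_pos hδ0) (by linarith)
  have htransition := le_measureReal_pi_forall_abs_mean_sub_integral_le
    (μ := discMeasure (tupleWeight P dD)) (hV.product hW)
    (g := fun t => sampleLag r γ f α t.1 t.2) (fun t _ => (measurable_of_finite _).aemeasurable)
    (fun t ht => hsample t.1 (Finset.mem_product.1 ht).1 t.2 (Finset.mem_product.1 ht).2) hn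
    (half_pos hδ0) (by linarith)
  have hprod := one_sub_add_le_measureReal_prod htransition hinitial
  rw [add_halves] at hprod
  rw [← ENNReal.ofReal_one, ← ENNReal.ofReal_sub _ hδ0.le]
  refine (ENNReal.ofReal_le_of_le_toReal hprod).trans (measure_mono ?_)
  rintro ⟨D, D0⟩ ⟨hD, hD0⟩ v hv w hw
  have hlog : ∀ N : ℝ, 2 * N / (δ / 2) = 4 * N / δ := fun N => by field_simp; ring
  have hmean := hD (v, w) (Finset.mk_mem_product hv hw)
  have hmean0 := mul_le_mul_of_nonneg_left (hD0 v hv) (sub_nonneg.2 hγ)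
  rw [integral_discMeasure htuple.1, Finset.card_product, Nat.cast_mul, hlog] at hmean
  rw [integral_discMeasure hμ0.1, hlog, ← mul_assoc] at hmean0
  rw [empLag_eq, Lag_eq_sum_tupleWeight fun s a => (hP s a).2, add_sub_add_comm, ← mul_sub]
  refine (abs_add_le _ _).trans (add_le_add ?_ hmean)
  rwa [abs_mul, abs_of_nonneg (sub_nonneg.2 hγ)]

end UniformConvergence

section SaddleGap

theorem exists_le_add_of_forall_abs_sub_le {ι κ : Type*} {L Lhat : ι → κ → ℝ} {V : Finset ι}
    {W : Finset κ} (hV : V.Nonempty) (hW : W.Nonempty) {ε εopt : ℝ}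
    (hclose : ∀ v ∈ V, ∀ w ∈ W, |Lhat v w - L v w| ≤ ε) {what : κ} (hwhat : what ∈ W)
    (hopt : W.sup' hW (fun w => V.inf' hV fun v => Lhat v w) - V.inf' hV (fun v => Lhat v what)
      ≤ εopt) {v : ι} (hv : v ∈ V) {w : κ} (hw : w ∈ W) :
    ∃ v' ∈ V, L v' w ≤ L v what + 2 * ε + εopt := by
  obtain ⟨v', hv', hv'_min⟩ := V.exists_mem_eq_inf' hV fun v => Lhat v w
  have hsup := W.le_sup' (fun w => V.inf' hV fun v => Lhat v w) hw
  have hinf := V.inf'_le (fun v => Lhat v what) hv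
  have hclose' := (abs_le.1 (hclose v' hv' w hw)).1
  have hclose_hat := (abs_le.1 (hclose v hv what hwhat)).2
  exact ⟨v', hv', by linarith⟩

theorem BellmanFlow.Lag_sub_le {P : S → A → S → ℝ} {r : S → A → ℝ} {μ0 : S → ℝ} {γ : ℝ}
    {dD : S → A → ℝ} {f : ℝ → ℝ} {α : ℝ} {wst : S → A → ℝ}
    (hflow : BellmanFlow P μ0 γ (dstar dD wst)) (vst : S → ℝ)
    (hP : ∀ s a s', 0 ≤ P s a s') (hμ0 : ∀ s, 0 ≤ μ0 s) (hγ : γ ∈ Set.Icc (0 : ℝ) 1)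
    (hdD : ∀ s a, 0 ≤ dD s a) (hα : 0 ≤ α) {V : Finset (S → ℝ)} {W : Finset (S → A → ℝ)}
    (hV : V.Nonempty) (hW : W.Nonempty) {Bw Be K : ℝ} (hBw : 0 ≤ Bw)
    (hWB : ∀ w ∈ W, ∀ s a, w s a ∈ Set.Icc 0 Bw) (he : ∀ v ∈ V, ∀ s a, |eV P r γ v s a| ≤ Be)
    (hf : ∀ w ∈ W, ∀ s a, 0 < dD s a → |f (w s a) - f (wst s a)| ≤ K * |w s a - wst s a|)
    {Lhat : (S → ℝ) → (S → A → ℝ) → ℝ} {ε εopt : ℝ}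
    (hclose : ∀ v ∈ V, ∀ w ∈ W, |Lhat v w - Lag P r μ0 γ dD f α v w| ≤ ε)
    {what : S → A → ℝ} (hwhat : what ∈ W)
    (hopt : W.sup' hW (fun w => V.inf' hV fun v => Lhat v w) - V.inf' hV (fun v => Lhat v what)
      ≤ εopt) :
    Lag P r μ0 γ dD f α vst wst - Lag P r μ0 γ dD f α vst what
      ≤ 2 * ε + (εopt + ((Bw + 1) * V.inf' hV (fun v => valueErr P μ0 dD v vst)
        + (Be + α * K) * W.inf' hW (fun w => ratioErr dD w wst))) := by
  obtain ⟨v, hv, hv_min⟩ := V.exists_mem_eq_inf' hV fun v => valueErr P μ0 dD v vst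
  obtain ⟨w, hw, hw_min⟩ := W.exists_mem_eq_inf' hW fun w => ratioErr dD w wst
  obtain ⟨v', hv', hv'_le⟩ := exists_le_add_of_forall_abs_sub_le hV hW hclose hwhat hopt hv hw
  have hvalue := (abs_le.1 (abs_Lag_sub_left_le (r := r) (f := f) (α := α) hP hμ0 hγ hdD hBw
    (hWB what hwhat) v vst)).2
  have hratio := (abs_le.1 (abs_Lag_sub_right_le (μ0 := μ0) hα hdD (he v' hv') (hf w hw))).1
  rw [hv_min, hw_min, hflow.Lag_eq vst v']
  linarith

theorem sqrt_add_le_sqrt_add_sqrt (x y : ℝ) : √(x + y) ≤ √x + √y := by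
  refine Real.sqrt_le_iff.2 ⟨by positivity, ?_⟩
  have hle : ∀ z : ℝ, z ≤ √z ^ 2 := fun z => by rw [Real.sq_sqrt']; exact le_max_left z 0
  nlinarith [hle x, hle y, mul_nonneg (Real.sqrt_nonneg x) (Real.sqrt_nonneg y)]

theorem le_two_mul_sqrt_add_sqrt {x c ε e : ℝ} (hc : 0 < c) (hx : c / 2 * x ^ 2 ≤ 2 * ε + e) :
    x ≤ 2 * √(ε / c) + √(2 * e / c) := by
  have hsq : x ^ 2 ≤ 2 ^ 2 * (ε / c) + 2 * e / c := by
    rw [← mul_div_assoc, ← add_div, le_div_iff₀ hc]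
    linarith
  calc x ≤ √(2 ^ 2 * (ε / c) + 2 * e / c) := Real.le_sqrt_of_sq_le hsq
    _ ≤ √(2 ^ 2 * (ε / c)) + √(2 * e / c) := sqrt_add_le_sqrt_add_sqrt _ _
    _ = 2 * √(ε / c) + √(2 * e / c) := by
      rw [Real.sqrt_mul (by norm_num), Real.sqrt_sq zero_le_two]

end SaddleGap

section SaddlePoint

namespace MDPAssumptions

variable {P : S → A → S → ℝ} {r : S → A → ℝ} {μ0 : S → ℝ} {γ : ℝ} {dD : S → A → ℝ}

theorem kernel_mem_stdSimplex (h : MDPAssumptions P r μ0 γ dD) (s : S) (a : A) :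
    P s a ∈ stdSimplex ℝ S :=
  ⟨h.P_nonneg s a, h.P_sum s a⟩

theorem initial_mem_stdSimplex (h : MDPAssumptions P r μ0 γ dD) : μ0 ∈ stdSimplex ℝ S :=
  ⟨fun s => (h.μ0_pos s).le, h.μ0_sum⟩

theorem abs_reward_le_one (h : MDPAssumptions P r μ0 γ dD) (s : S) (a : A) : |r s a| ≤ 1 := by
  rw [abs_of_nonneg (h.r_nonneg s a)]
  exact h.r_le_one s a

end MDPAssumptions

variable {P : S → A → S → ℝ} {r : S → A → ℝ} {μ0 : S → ℝ} {γ : ℝ} {dD : S → A → ℝ}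
  {f f' : ℝ → ℝ} {α Mf Bw Bf' Bf : ℝ} {vst : S → ℝ} {wst what : S → A → ℝ}

theorem IsSaddle.mul_l2nrm_sq_le_Lag_sub (hsad : IsSaddle P r μ0 γ dD f α vst wst)
    (hα : 0 ≤ α) (hdD : ∀ s a, 0 ≤ dD s a) (hf : StrongConvexOn (Set.Ici 0) Mf f)
    (hwhat : ∀ s a, 0 ≤ what s a) :
    α * Mf / 2 * l2nrm dD (fun s a => what s a - wst s a) ^ 2
      ≤ Lag P r μ0 γ dD f α vst wst - Lag P r μ0 γ dD f α vst what := by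
  rw [l2nrm_sq hdD]
  exact mul_sum_sq_le_Lag_sub hα hdD hf hsad.1 hwhat hsad.2.2

theorem IsSaddle.l2nrm_sub_le (hsad : IsSaddle P r μ0 γ dD f α vst wst)
    (hMDP : MDPAssumptions P r μ0 γ dD) (hα : 0 < α) (hreg : RegAssumptions f f' Mf Bw Bf' Bf)
    {V : Finset (S → ℝ)} {W : Finset (S → A → ℝ)} (hV : V.Nonempty) (hW : W.Nonempty)
    (hBw : 0 ≤ Bw) (hA1 : ∀ s a, dstar dD wst s a ≤ Bw * dD s a)
    (hWB : ∀ w ∈ W, ∀ s a, 0 ≤ w s a ∧ w s a ≤ Bw) {Bv : ℝ} (hVB : ∀ v ∈ V, ∀ s, |v s| ≤ Bv)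
    {Lhat : (S → ℝ) → (S → A → ℝ) → ℝ} {ε εopt : ℝ}
    (hclose : ∀ v ∈ V, ∀ w ∈ W, |Lhat v w - Lag P r μ0 γ dD f α v w| ≤ ε) (hwhat : what ∈ W)
    (hopt : W.sup' hW (fun w => V.inf' hV fun v => Lhat v w) - V.inf' hV (fun v => Lhat v what)
      ≤ εopt) :
    l2nrm dD (fun s a => what s a - wst s a) ≤ 2 * √(ε / (α * Mf))
      + √(2 * (εopt + ((Bw + 1) * V.inf' hV (fun v => valueErr P μ0 dD v vst)
        + (((1 + γ) * Bv + 1) + α * Bf') * W.inf' hW (fun w => ratioErr dD w wst)))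
          / (α * Mf)) := by
  have hwst : ∀ s a, 0 < dD s a → wst s a ∈ Set.Icc 0 Bw := fun s a hpos =>
    ⟨hsad.1 s a, le_of_mul_le_mul_right (hA1 s a) hpos⟩
  have hconv : StrongConvexOn (Set.Ici 0) Mf f :=
    ⟨convex_Ici 0, fun _ _ _ _ => hreg.strong.2 trivial trivial⟩
  have hgap := (bellmanFlow_of_forall_Lag_le hsad.2.1).Lag_sub_le vst hMDP.P_nonneg
    hMDP.initial_mem_stdSimplex.1 ⟨hMDP.γ_nonneg, hMDP.γ_lt_one.le⟩ hMDP.dD_nonneg hα.le hV hW hBw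
    hWB (fun v hv => abs_eV_le hMDP.kernel_mem_stdSimplex hMDP.γ_nonneg hMDP.abs_reward_le_one
      (hVB v hv))
    (fun w hw s a hpos => hreg.abs_sub_le (hWB w hw s a) (hwst s a hpos)) hclose hwhat hopt
  exact le_two_mul_sqrt_add_sqrt (mul_pos hα hreg.Mf_pos)
    ((hsad.mul_l2nrm_sq_le_Lag_sub hα.le hMDP.dD_nonneg hconv fun s a =>
      (hWB what hwhat s a).1).trans hgap)

theorem IsSaddle.Jret_sub_le [Nonempty A] (hsad : IsSaddle P r μ0 γ dD f α vst wst)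
    (hMDP : MDPAssumptions P r μ0 γ dD) {π' : S → A → ℝ} (hπ' : IsPolicy π') :
    Jret P r μ0 γ (normPolicy (dstar dD wst)) - Jret P r μ0 γ π'
      ≤ 1 / (1 - γ) * expL1 (dstar dD wst) (normPolicy (dstar dD wst)) π' := by
  have hdst : ∀ s a, 0 ≤ dstar dD wst s a := fun s a =>
    mul_nonneg (hsad.1 s a) (hMDP.dD_nonneg s a)
  exact (le_abs_self _).trans (abs_Jret_sub_le_expL1 hMDP.kernel_mem_stdSimplex
    hMDP.initial_mem_stdSimplex ⟨hMDP.γ_nonneg, hMDP.γ_lt_one⟩ hMDP.abs_reward_le_one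
    (bellmanFlow_of_forall_Lag_le hsad.2.1) (isConditional_normPolicy hdst) hdst
    (isPolicy_normPolicy hdst) hπ')

theorem IsSaddle.expL1_extractPolicy_le [Nonempty A] (hsad : IsSaddle P r μ0 γ dD f α vst wst)
    (hMDP : MDPAssumptions P r μ0 γ dD) (hwhat : ∀ s a, 0 ≤ what s a) :
    expL1 (dstar dD wst) (normPolicy (dstar dD wst)) (extractPolicy (behPolicy dD) what)
      ≤ 2 * l2nrm dD fun s a => what s a - wst s a := by
  have hbeh := (isPolicy_normPolicy hMDP.dD_nonneg).1
  have hdst := fun s a => mul_nonneg (hsad.1 s a) (hMDP.dD_nonneg s a)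
  have hextract := isConditional_extractPolicy (isConditional_normPolicy hMDP.dD_nonneg) hbeh hwhat
  exact (expL1_dstar_le hMDP.dD_nonneg hsad.1 (isConditional_normPolicy hdst) hextract
    (isPolicy_extractPolicy hbeh hwhat)).trans
    (mul_le_mul_of_nonneg_left (ratioErr_le_l2nrm hMDP.dD_nonneg hMDP.dD_sum what wst)
      zero_le_two)

end SaddlePoint

theorem stmt3_general {S A : Type*} [Fintype S] [Fintype A] [Nonempty S] [Nonempty A]
    [MeasurableSpace S] [MeasurableSpace A]
    [MeasurableSingletonClass S] [MeasurableSingletonClass A]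
    {P : S → A → S → ℝ} {r : S → A → ℝ} {μ0 : S → ℝ} {γ : ℝ} {dD : S → A → ℝ}
    (hMDP : MDPAssumptions P r μ0 γ dD)
    {f f' : ℝ → ℝ} {α δ : ℝ} (hα : 0 < α) (hδ0 : 0 < δ) (hδ1 : δ < 1)
    {Mf Bw Bf' Bf Bv Be : ℝ} (hreg : RegAssumptions f f' Mf Bw Bf' Bf)
    (hBe : Be = (1 + γ) * Bv + 1) {vst : S → ℝ} {wst : S → A → ℝ}
    (hsad : IsSaddle P r μ0 γ dD f α vst wst)
    {V : Finset (S → ℝ)} {W : Finset (S → A → ℝ)} (hV : V.Nonempty) (hW : W.Nonempty)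
    (hA1 : ∀ s a, dstar dD wst s a ≤ Bw * dD s a)
    (hA4 : ∀ w ∈ W, ∀ s a, 0 ≤ w s a ∧ w s a ≤ Bw)
    (hA6 : ∀ v ∈ V, ∀ s, |v s| ≤ Bv)
    {εopt : ℝ} {n n0 : ℕ} (hn : 0 < n) (hn0 : 0 < n0)
    {what : (Fin n → (S × A) × S) × (Fin n0 → S) → S → A → ℝ}
    (halg : ∀ ω, what ω ∈ W ∧
      W.sup' hW (fun w => V.inf' hV fun v => empLag r γ f α ω.1 ω.2 v w)
          - V.inf' hV (fun v => empLag r γ f α ω.1 ω.2 v (what ω)) ≤ εopt) :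
    1 - ENNReal.ofReal δ ≤
      dataMeasure P dD μ0 n n0 {ω |
        Jret P r μ0 γ (normPolicy (dstar dD wst))
            - Jret P r μ0 γ (extractPolicy (behPolicy dD) (what ω))
          ≤ (1 / (1 - γ)) * expL1 (dstar dD wst) (normPolicy (dstar dD wst))
              (extractPolicy (behPolicy dD) (what ω)) ∧
        (1 / (1 - γ)) * expL1 (dstar dD wst) (normPolicy (dstar dD wst))
            (extractPolicy (behPolicy dD) (what ω))
          ≤ (2 / (1 - γ)) * l2nrm dD (fun s a => what ω s a - wst s a) ∧
        (2 / (1 - γ)) * l2nrm dD (fun s a => what ω s a - wst s a)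
          ≤ (4 / (1 - γ)) * √(epsStat γ α Bv Bf Bw Be δ V.card W.card n n0 / (α * Mf))
            + (2 / (1 - γ)) * √(2 * (εopt + ((Bw + 1) * V.inf' hV (fun v => valueErr P μ0 dD v vst)
                + (Be + α * Bf') * W.inf' hW (fun w => ratioErr dD w wst))) / (α * Mf))} := by
  subst hBe
  have hBw : 0 ≤ Bw := by
    obtain ⟨w, hw⟩ := hW
    have hw_bdd := hA4 w hw (Classical.arbitrary S) (Classical.arbitrary A)
    exact hw_bdd.1.trans hw_bdd.2
  refine (le_dataMeasure_forall_abs_empLag_sub_le hMDP.kernel_mem_stdSimplex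
    hMDP.initial_mem_stdSimplex hMDP.γ_lt_one.le hMDP.dD_nonneg hMDP.dD_sum hV hW hA6
    (fun v hv w hw => abs_sampleLag_le hMDP.γ_nonneg hα.le hMDP.abs_reward_le_one hreg.f_bdd
      (hA6 v hv) (hA4 w hw)) hn hn0 hδ0 hδ1).trans (measure_mono fun ω hclose => ?_)
  obtain ⟨hwhat, hopt⟩ := halg ω
  have hwhat0 : ∀ s a, 0 ≤ what ω s a := fun s a => (hA4 _ hwhat s a).1
  have hpol := isPolicy_extractPolicy (isPolicy_normPolicy hMDP.dD_nonneg).1 hwhat0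
  have hhorizon : 0 ≤ 1 / (1 - γ) := one_div_nonneg.2 (sub_nonneg.2 hMDP.γ_lt_one.le)
  have hpolicy := mul_le_mul_of_nonneg_left (hsad.expL1_extractPolicy_le hMDP hwhat0) hhorizon
  have hratio := mul_le_mul_of_nonneg_left
    (hsad.l2nrm_sub_le hMDP hα hreg hV hW hBw hA1 hA4 hA6 hclose hwhat hopt) hhorizon
  refine ⟨hsad.Jret_sub_le hMDP hpol, hpolicy.trans_eq (by ring), ?_⟩
  calc 2 / (1 - γ) * l2nrm dD (fun s a => what ω s a - wst s a)
      = 2 * (1 / (1 - γ) * l2nrm dD (fun s a => what ω s a - wst s a)) := by ring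
    _ ≤ _ := mul_le_mul_of_nonneg_left hratio zero_le_two
    _ = _ := by ring

/-- Theorem 2: error-robust version of Theorem 1, Inexact-PRO-RL. -/
theorem stmt3
    {S A : Type*} [Fintype S] [Fintype A] [Nonempty S] [Nonempty A]
    [MeasurableSpace S] [MeasurableSpace A]
    [MeasurableSingletonClass S] [MeasurableSingletonClass A]
    (P : S → A → S → ℝ) (r : S → A → ℝ) (μ0 : S → ℝ) (γ : ℝ) (dD : S → A → ℝ)
    (hMDP : MDPAssumptions P r μ0 γ dD)
    (f f' : ℝ → ℝ) (α δ : ℝ) (hα : 0 < α) (hδ0 : 0 < δ) (hδ1 : δ < 1)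
    (Mf Bw Bf' Bf Bv Be : ℝ)
    (hreg : RegAssumptions f f' Mf Bw Bf' Bf) (hfnn : ∀ x, 0 ≤ f x)
    (hBv : Bv = (α * Bf' + 1) / (1 - γ)) (hBe : Be = (1 + γ) * Bv + 1)
    (vst : S → ℝ) (wst : S → A → ℝ)
    (hsad : IsSaddle P r μ0 γ dD f α vst wst)
    (V : Finset (S → ℝ)) (W : Finset (S → A → ℝ))
    (hV : V.Nonempty) (hW : W.Nonempty)
    (hA1 : ∀ s a, dstar dD wst s a ≤ Bw * dD s a)
    (hA4 : ∀ w ∈ W, ∀ s a, 0 ≤ w s a ∧ w s a ≤ Bw)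
    (hA6 : ∀ v ∈ V, ∀ s, |v s| ≤ Bv)
    (εov εow : ℝ)
    (n n0 : ℕ) (hn : 0 < n) (hn0 : 0 < n0)
    (vhat : (Fin n → (S × A) × S) × (Fin n0 → S) → S → ℝ)
    (what : (Fin n → (S × A) × S) × (Fin n0 → S) → S → A → ℝ)
    -- Inexact-PRO-RL: approximate max-min point of the empirical Lagrangian
    (halg : ∀ ω, vhat ω ∈ V ∧ what ω ∈ W ∧
      empLag r γ f α ω.1 ω.2 (vhat ω) (what ω)
          - V.inf' hV (fun v => empLag r γ f α ω.1 ω.2 v (what ω)) ≤ εov ∧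
      W.sup' hW (fun w => V.inf' hV fun v => empLag r γ f α ω.1 ω.2 v w)
          - V.inf' hV (fun v => empLag r γ f α ω.1 ω.2 v (what ω)) ≤ εow) :
    1 - ENNReal.ofReal δ ≤
      dataMeasure P dD μ0 n n0 {ω |
        Jret P r μ0 γ (normPolicy (dstar dD wst))
            - Jret P r μ0 γ (extractPolicy (behPolicy dD) (what ω))
          ≤ (1 / (1 - γ)) * expL1 (dstar dD wst) (normPolicy (dstar dD wst))
              (extractPolicy (behPolicy dD) (what ω)) ∧
        (1 / (1 - γ)) * expL1 (dstar dD wst) (normPolicy (dstar dD wst))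
            (extractPolicy (behPolicy dD) (what ω))
          ≤ (2 / (1 - γ)) * l2nrm dD (fun s a => what ω s a - wst s a) ∧
        (2 / (1 - γ)) * l2nrm dD (fun s a => what ω s a - wst s a)
          ≤ (4 / (1 - γ)) *
              Real.sqrt (epsStat γ α Bv Bf Bw Be δ V.card W.card n n0 / (α * Mf))
            + (2 / (1 - γ)) *
              Real.sqrt (2 * ((εov + εow) +
                ((Bw + 1) *
                  (V.inf' hV fun v => (∑ s : S, μ0 s * |v s - vst s|)
                    + (∑ s : S, (∑ a : A, dD s a) * |v s - vst s|)
                    + ∑ s : S, (∑ s' : S, ∑ a' : A, dD s' a' * P s' a' s) * |v s - vst s|)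
                  + (Be + α * Bf') *
                    (W.inf' hW fun w => ∑ s : S, ∑ a : A, dD s a * |w s a - wst s a|)))
                / (α * Mf)) } := by
  refine stmt3_general hMDP hα hδ0 hδ1 hreg hBe hsad hV hW hA1 hA4 hA6 hn hn0 fun ω => ?_
  obtain ⟨hvhat, hwhat, hov, how⟩ := halg ω
  have hinf := V.inf'_le (fun v => empLag r γ f α ω.1 ω.2 v (what ω)) hvhat
  exact ⟨hwhat, how.trans (le_add_of_nonneg_left ((sub_nonneg.2 hinf).trans hov))⟩

end ProRL
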